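/- arXiv:2006.09076 — 2 statements merged into one kernel-verified Lean document; each statement's English description precedes it below -/
import Mathlib

section
/- Shuffle relation for finite multiple zeta values: let p be a prime and let k=(k_1,…,k_a), l=(l_1,…,l_b) be nonempty indices. Then (−1)^{wt(l)}·ζ^{(p)}(k_1,…,k_a, l_b, l_{b−1},…,l_1) = Σ_h c_h·ζ^{(p)}(h) in ℤ/pℤ, where h runs over the nonempty indices with w(h) occurring in the shuffle product w(k)⧢w(l) and c_h is its integer coefficient. -/
open scoped Classical

noncomputable section

/-- The finite multiple harmonic sum `ζ^{(p)}(k) = Σ_{0 < n₁ < ⋯ < n_d ≤ p-1} ∏ nᵢ^(-kᵢ)`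
computed in `ZMod p` (the `nᵢ` range over nonzero residues). -/
def zetaP (p : ℕ) (k : List ℕ) : ZMod p :=
  ∑ n ∈ Finset.univ.filter
      (fun n : Fin k.length → Fin p => (∀ i, 0 < (n i : ℕ)) ∧ StrictMono n),
    ∏ i, (((n i : ℕ) : ZMod p)⁻¹) ^ k.get i

/-- The word (over the alphabet `{x, y}`, encoded with `y = true`, `x = false`)
attached to an index: `w(k) = y x^(k₁-1) y x^(k₂-1) ⋯ y x^(kₐ-1)`. -/
def word (k : List ℕ) : List Bool :=
  k.flatMap fun ki => true :: List.replicate (ki - 1) false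

/-- The index attached to a word (left inverse of `word` on words beginning with `y`). -/
def wordToIndex (w : List Bool) : List ℕ :=
  w.foldl (fun acc b => if b then acc.concat 1 else acc.dropLast.concat (acc.getLast! + 1)) []

/-- The shuffle product of two words, as a formal `ℤ`-linear combination of words:
`1 ⧢ w = w ⧢ 1 = w` and `(au) ⧢ (bv) = a (u ⧢ bv) + b (au ⧢ v)`. -/
def shuffle : List Bool → List Bool → (List Bool →₀ ℤ)
  | [], w => Finsupp.single w 1
  | a :: u, [] => Finsupp.single (a :: u) 1
  | a :: u, b :: v =>
      (shuffle u (b :: v)).mapDomain (List.cons a) +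
        (shuffle (a :: u) v).mapDomain (List.cons b)
  termination_by u v => u.length + v.length

/-!
Let `Li_w = ∑ₙ Li_w(n) tⁿ` be the iterated integral of the word `w` with respect to the forms
`x = dt/t` and `y = dt/(1-t)`. Integration by parts gives `Li_u Li_v = Li_{u ⧢ v}`; modulo `p` it
divides only by the exponents, so it survives in degrees `< p`. Summing coefficients over all
degrees `n < p` turns `Li_{w(h)}` into `ζ^{(p)}(h)`, and the product `Li_{w(k)} Li_{w(l)}` into the
sum of `Li_{w(k)}(m) Li_{w(l)}(n)` over `m + n < p`. The substitution `n ↦ p - n` in the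
summation variables belonging to `l` moves them above `m` in reverse order, at the cost of
`(-1)^{wt(l)}`.
-/

theorem shuffle_nil_left (w : List Bool) : shuffle [] w = Finsupp.single w 1 := by
  rw [shuffle]

theorem shuffle_nil_right (w : List Bool) : shuffle w [] = Finsupp.single w 1 := by
  cases w <;> rw [shuffle]

theorem shuffle_cons_cons (a b : Bool) (u v : List Bool) :
    shuffle (a :: u) (b :: v) =
      (shuffle u (b :: v)).mapDomain (List.cons a) +
        (shuffle (a :: u) v).mapDomain (List.cons b) := by
  rw [shuffle]

theorem mapDomain_append_mapDomain_cons {α M : Type*} [AddCommMonoid M] (a : α) (t : List α)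
    (f : List α →₀ M) :
    (f.mapDomain (List.cons a)).mapDomain (· ++ t) =
      (f.mapDomain (· ++ t)).mapDomain (List.cons a) := by
  rw [← Finsupp.mapDomain_comp, ← Finsupp.mapDomain_comp]
  rfl

theorem shuffle_append_singleton (a b : Bool) (u v : List Bool) :
    shuffle (u ++ [a]) (v ++ [b]) =
      (shuffle u (v ++ [b])).mapDomain (· ++ [a]) +
        (shuffle (u ++ [a]) v).mapDomain (· ++ [b]) := by
  induction u generalizing v with
  | nil =>
    induction v with
    | nil =>
      simp only [List.nil_append, shuffle_cons_cons, shuffle_nil_left, shuffle_nil_right,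
        Finsupp.mapDomain_single, List.singleton_append, add_comm]
    | cons d v ihv =>
      simp only [List.nil_append, List.cons_append, shuffle_cons_cons, shuffle_nil_left,
        Finsupp.mapDomain_single, Finsupp.mapDomain_add, mapDomain_append_mapDomain_cons]
        at ihv ⊢
      rw [ihv, Finsupp.mapDomain_add, Finsupp.mapDomain_single]
      abel
  | cons c u ihu =>
    induction v with
    | nil =>
      specialize ihu []
      simp only [List.nil_append, List.cons_append, shuffle_cons_cons, shuffle_nil_right,
        Finsupp.mapDomain_single, Finsupp.mapDomain_add, mapDomain_append_mapDomain_cons]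
        at ihu ⊢
      rw [ihu, Finsupp.mapDomain_add, Finsupp.mapDomain_single]
      abel
    | cons d v ihv =>
      specialize ihu (d :: v)
      simp only [List.cons_append, shuffle_cons_cons, Finsupp.mapDomain_add,
        mapDomain_append_mapDomain_cons] at ihu ihv ⊢
      rw [ihu, ihv]
      simp only [Finsupp.mapDomain_add]
      abel

theorem head?_eq_or_of_mem_support_shuffle {u v w : List Bool}
    (hw : w ∈ (shuffle u v).support) : w.head? = u.head? ∨ w.head? = v.head? := by
  rcases u with _ | ⟨a, u⟩
  · rw [shuffle_nil_left] at hw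
    rw [Finset.mem_singleton.1 (Finsupp.support_single_subset hw)]
    exact .inr rfl
  rcases v with _ | ⟨b, v⟩
  · rw [shuffle_nil_right] at hw
    rw [Finset.mem_singleton.1 (Finsupp.support_single_subset hw)]
    exact .inl rfl
  rw [shuffle_cons_cons] at hw
  refine (Finset.mem_union.1 (Finsupp.support_add hw)).imp (fun h ↦ ?_) (fun h ↦ ?_) <;>
  · obtain ⟨w', -, rfl⟩ := Finset.mem_image.1 (Finsupp.mapDomain_support h)
    rfl

theorem word_append (k l : List ℕ) : word (k ++ l) = word k ++ word l :=
  List.flatMap_append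

theorem word_singleton (s : ℕ) : word [s] = true :: List.replicate (s - 1) false :=
  List.flatMap_singleton _ _

theorem head?_word_ne_false (k : List ℕ) : (word k).head? ≠ some false := by
  cases k <;> simp [word]

theorem wordToIndex_append_true (w : List Bool) :
    wordToIndex (w ++ [true]) = wordToIndex w ++ [1] := by
  simp [wordToIndex]

theorem wordToIndex_append_false (w : List Bool) :
    wordToIndex (w ++ [false]) =
      (wordToIndex w).dropLast ++ [(wordToIndex w).getLast! + 1] := by
  simp [wordToIndex]

theorem one_le_of_mem_wordToIndex {w : List Bool} : ∀ i ∈ wordToIndex w, 1 ≤ i := by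
  induction w using List.reverseRecOn with
  | nil => simp [wordToIndex]
  | append_singleton w b ih =>
    intro i hi
    cases b with
    | true =>
      rw [wordToIndex_append_true, List.mem_append, List.mem_singleton] at hi
      exact hi.elim (ih i) fun h ↦ h.ge
    | false =>
      rw [wordToIndex_append_false, List.mem_append, List.mem_singleton] at hi
      exact hi.elim (fun h ↦ ih i (List.mem_of_mem_dropLast h)) fun h ↦ h ▸ Nat.le_add_left 1 _

theorem head?_ne_of_append {α : Type*} {u v : List α} {a : α} (h : (u ++ v).head? ≠ some a) :
    u.head? ≠ some a := by
  cases u <;> simp_all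

theorem word_wordToIndex {w : List Bool} (hw : w.head? ≠ some false) :
    word (wordToIndex w) = w := by
  induction w using List.reverseRecOn with
  | nil => rfl
  | append_singleton w b ih =>
    specialize ih (head?_ne_of_append hw)
    cases b with
    | true => rw [wordToIndex_append_true, word_append, ih, word_singleton]; rfl
    | false =>
      have hpos := one_le_of_mem_wordToIndex (w := w)
      rw [wordToIndex_append_false]
      rcases List.eq_nil_or_concat' (wordToIndex w) with h | ⟨k, s, h⟩
      · rw [h] at ih
        subst ih
        exact absurd rfl hw
      · rw [h] at ih hpos ⊢
        have hlast : (k ++ [s]).getLast! = s := by simp [List.getLast!_eq_getLast?_getD]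
        have hs : s - 1 + 1 = s := Nat.sub_add_cancel (hpos s (by simp))
        rw [hlast, List.dropLast_concat, ← ih, word_append, word_append, word_singleton,
          word_singleton, Nat.add_sub_cancel, List.append_assoc, List.cons_append,
          ← List.replicate_succ', hs]

section IteratedIntegral

open PowerSeries

variable {K : Type*} [Field K]

/-- The primitive `∫₀ᵗ f ds/s` of a power series `f` without constant term. The coefficients whose
degree vanishes in `K` are set to `0`. -/
def primitive : K⟦X⟧ →ₗ[K] K⟦X⟧ where
  toFun f := mk fun n ↦ (n : K)⁻¹ * coeff n f
  map_add' f g := by ext n; simp [mul_add]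
  map_smul' c f := by ext n; simp [mul_left_comm]

@[simp]
theorem coeff_primitive (f : K⟦X⟧) (n : ℕ) : coeff n (primitive f) = (n : K)⁻¹ * coeff n f :=
  coeff_mk n fun m ↦ (m : K)⁻¹ * coeff m f

@[simp]
theorem constantCoeff_primitive (f : K⟦X⟧) : constantCoeff (primitive f) = 0 := by
  rw [← coeff_zero_eq_constantCoeff_apply, coeff_primitive, Nat.cast_zero, inv_zero, zero_mul]

theorem X_pow_dvd_primitive {N : ℕ} {f : K⟦X⟧} (h : X ^ N ∣ f) : X ^ N ∣ primitive f := by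
  rw [X_pow_dvd_iff] at h ⊢
  intro n hn
  rw [coeff_primitive, h n hn, mul_zero]

theorem natCast_mul_coeff_primitive {f : K⟦X⟧} (hf : constantCoeff f = 0) {n : ℕ}
    (hn : (n : K) = 0 → n = 0) : n * coeff n (primitive f) = coeff n f := by
  by_cases h : (n : K) = 0
  · rw [hn h, coeff_zero_eq_constantCoeff_apply, coeff_zero_eq_constantCoeff_apply, hf,
      constantCoeff_primitive, mul_zero]
  · rw [coeff_primitive, mul_inv_cancel_left₀ h]

/-- Integration by parts: the Leibniz rule for `t d/dt`, which `primitive` inverts below degree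
`N`. -/
theorem X_pow_dvd_primitive_mul_primitive_sub {N : ℕ} (hN : ∀ n < N, (n : K) = 0 → n = 0)
    {f g : K⟦X⟧} (hf : constantCoeff f = 0) (hg : constantCoeff g = 0) :
    X ^ N ∣ primitive f * primitive g - primitive (f * primitive g + primitive f * g) := by
  rw [X_pow_dvd_iff]
  intro n hn
  have leibniz : n * coeff n (primitive f * primitive g) =
      coeff n (f * primitive g + primitive f * g) := by
    rw [map_add, coeff_mul, coeff_mul, coeff_mul, Finset.mul_sum, ← Finset.sum_add_distrib]
    refine Finset.sum_congr rfl fun ⟨i, j⟩ hij ↦ ?_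
    rw [Finset.HasAntidiagonal.mem_antidiagonal] at hij
    rw [← natCast_mul_coeff_primitive hf (hN i (by omega)),
      ← natCast_mul_coeff_primitive hg (hN j (by omega)), ← hij]
    push_cast
    ring
  rw [map_sub, sub_eq_zero, coeff_primitive, ← leibniz]
  by_cases h : (n : K) = 0
  · simp [hN n hn h]
  · rw [inv_mul_cancel_left₀ h]

/-- The power series `φ` for which the letter stands for the differential form `φ dt/t`: the letter
`y` is `dt/(1-t)` and the letter `x` is `dt/t`. -/
def letterForm : Bool → K⟦X⟧
  | true => X * mk 1
  | false => 1

theorem coeff_mul_letterForm_true (f : K⟦X⟧) (n : ℕ) :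
    coeff n (f * letterForm true) = ∑ m ∈ Finset.range n, coeff m f := by
  rw [letterForm, mul_left_comm]
  cases n with
  | zero => simp
  | succ n =>
    rw [coeff_succ_X_mul, coeff_mul, Finset.Nat.sum_antidiagonal_eq_sum_range_succ_mk]
    simp

/-- The iterated integral `Li_w` of a word; the first letter is the innermost integration. It starts
from `f` rather than from the constant `1`, so that a word can be integrated piecewise. -/
def iteratedIntegral (f : K⟦X⟧) (w : List Bool) : K⟦X⟧ :=
  w.foldl (fun g a ↦ primitive (g * letterForm a)) f

theorem iteratedIntegral_append (f : K⟦X⟧) (u v : List Bool) :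
    iteratedIntegral f (u ++ v) = iteratedIntegral (iteratedIntegral f u) v :=
  List.foldl_append

theorem iteratedIntegral_append_singleton (f : K⟦X⟧) (w : List Bool) (a : Bool) :
    iteratedIntegral f (w ++ [a]) = primitive (iteratedIntegral f w * letterForm a) :=
  iteratedIntegral_append f w [a]

theorem constantCoeff_iteratedIntegral_mul_letterForm (f : K⟦X⟧) {w : List Bool} {a : Bool}
    (h : (w ++ [a]).head? ≠ some false) :
    constantCoeff (iteratedIntegral f w * letterForm a) = 0 := by
  rcases List.eq_nil_or_concat' w with rfl | ⟨w, b, rfl⟩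
  · obtain rfl : a = true := by simpa using h
    simp [letterForm]
  · rw [iteratedIntegral_append_singleton, map_mul, constantCoeff_primitive, zero_mul]

/-- Linear extension of `iteratedIntegral 1` to formal combinations of words. -/
def polylog : (List Bool →₀ ℤ) →ₗ[ℤ] K⟦X⟧ :=
  Finsupp.linearCombination ℤ (iteratedIntegral 1)

theorem polylog_single (w : List Bool) :
    polylog (Finsupp.single w 1) = iteratedIntegral (1 : K⟦X⟧) w := by
  rw [polylog, Finsupp.linearCombination_single, one_smul]

theorem polylog_mapDomain_append_singleton (f : List Bool →₀ ℤ) (a : Bool) :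
    polylog (f.mapDomain (· ++ [a])) = primitive (polylog (K := K) f * letterForm a) := by
  rw [polylog, Finsupp.linearCombination_mapDomain]
  simp only [Finsupp.linearCombination_apply, Finsupp.sum, Function.comp_apply,
    iteratedIntegral_append_singleton, Finset.sum_mul, map_sum, smul_mul_assoc, map_zsmul]

theorem X_pow_dvd_iteratedIntegral_mul_sub_polylog_shuffle {N : ℕ}
    (hN : ∀ n < N, (n : K) = 0 → n = 0) {u v : List Bool}
    (hu : u.head? ≠ some false) (hv : v.head? ≠ some false) :
    X ^ N ∣ iteratedIntegral (1 : K⟦X⟧) u * iteratedIntegral 1 v - polylog (shuffle u v) := by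
  induction u using List.reverseRecOn generalizing v with
  | nil => simp [shuffle_nil_left, polylog_single, iteratedIntegral]
  | append_singleton u a ihu =>
    induction v using List.reverseRecOn with
    | nil => simp [shuffle_nil_right, polylog_single, iteratedIntegral]
    | append_singleton v b ihv =>
      have byParts := X_pow_dvd_primitive_mul_primitive_sub hN
        (constantCoeff_iteratedIntegral_mul_letterForm 1 hu)
        (constantCoeff_iteratedIntegral_mul_letterForm 1 hv)
      have left := X_pow_dvd_primitive
        ((ihu (head?_ne_of_append hu) hv).mul_right (letterForm a))
      have right := X_pow_dvd_primitive
        ((ihv (head?_ne_of_append hv)).mul_right (letterForm b))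
      convert (byParts.add left).add right using 1
      rw [shuffle_append_singleton, map_add, polylog_mapDomain_append_singleton,
        polylog_mapDomain_append_singleton]
      simp only [iteratedIntegral_append_singleton, sub_mul, map_sub, map_add, mul_right_comm,
        ← mul_assoc]
      ring

theorem coeff_iteratedIntegral_replicate_false (f : K⟦X⟧) (t n : ℕ) :
    coeff n (iteratedIntegral f (List.replicate t false)) = (n : K)⁻¹ ^ t * coeff n f := by
  induction t with
  | zero => simp [iteratedIntegral]
  | succ t ih =>
    rw [List.replicate_succ', iteratedIntegral_append_singleton, letterForm, mul_one,
      coeff_primitive, ih, pow_succ', mul_assoc]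

theorem coeff_iteratedIntegral_word_singleton (f : K⟦X⟧) {s : ℕ} (hs : 1 ≤ s) (n : ℕ) :
    coeff n (iteratedIntegral f (word [s])) =
      (n : K)⁻¹ ^ s * ∑ m ∈ Finset.range n, coeff m f := by
  obtain ⟨t, rfl⟩ := Nat.exists_eq_add_of_le' hs
  rw [word_singleton, Nat.add_sub_cancel, ← List.singleton_append, iteratedIntegral_append,
    coeff_iteratedIntegral_replicate_false, ← List.nil_append [true],
    iteratedIntegral_append_singleton, coeff_primitive, coeff_mul_letterForm_true, pow_succ,
    mul_assoc]
  rfl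

end IteratedIntegral

section HarmonicSum

variable {K : Type*} [Field K]

/-- The multiple harmonic sum `∑_{a < n₁ < ⋯ < n_d < b} ∏ nᵢ^(-kᵢ)` over an open interval. -/
def harmonicSum (a b : ℕ) : List ℕ → K
  | [] => 1
  | s :: k => ∑ n ∈ Finset.Ioo a b, (n : K)⁻¹ ^ s * harmonicSum n b k

theorem harmonicSum_append_singleton (a b : ℕ) (k : List ℕ) (s : ℕ) :
    harmonicSum a b (k ++ [s]) =
      ∑ n ∈ Finset.Ioo a b, harmonicSum a n k * (n : K)⁻¹ ^ s := by
  induction k generalizing a with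
  | nil => simp [harmonicSum]
  | cons r k ih =>
    simp only [List.cons_append, harmonicSum, ih, Finset.mul_sum, Finset.sum_mul, mul_assoc]
    refine Finset.sum_comm' fun m n ↦ ?_
    simp only [Finset.mem_Ioo]
    omega

theorem harmonicSum_reverse (p : ℕ) [CharP K p] {a b : ℕ} (hb : b ≤ p) (k : List ℕ) :
    harmonicSum (p - b) (p - a) k.reverse = (-1 : K) ^ k.sum * harmonicSum a b k := by
  induction k generalizing a with
  | nil => simp [harmonicSum]
  | cons s k ih =>
    rw [List.reverse_cons, harmonicSum_append_singleton, harmonicSum, Finset.mul_sum]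
    refine Finset.sum_bij' (fun n _ ↦ p - n) (fun n _ ↦ p - n) ?_ ?_ ?_ ?_ ?_
    · intro n hn; simp only [Finset.mem_Ioo] at hn ⊢; omega
    · intro n hn; simp only [Finset.mem_Ioo] at hn ⊢; omega
    · intro n hn; simp only [Finset.mem_Ioo] at hn; omega
    · intro n hn; simp only [Finset.mem_Ioo] at hn; omega
    · intro n hn
      rw [Finset.mem_Ioo] at hn
      have hnp : p - (p - n) = n := by omega
      have hcast : ((p - n : ℕ) : K) = -n := by
        rw [Nat.cast_sub (by omega), CharP.cast_eq_zero, zero_sub]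
      have hih := ih (a := p - n)
      rw [hnp] at hih
      have hinv : (n : K)⁻¹ ^ s = (-1) ^ s * ((p - n : ℕ) : K)⁻¹ ^ s := by
        rw [hcast, ← mul_pow, inv_neg, neg_one_mul, neg_neg]
      rw [hih, hinv, List.sum_cons, pow_add]
      ring

theorem sum_coeff_mul_harmonicSum_append (f : PowerSeries K) (N : ℕ) {k : List ℕ}
    (hk : ∀ i ∈ k, 1 ≤ i) (l : List ℕ) :
    ∑ m ∈ Finset.range N, f.coeff m * harmonicSum m N (k ++ l) =
      ∑ n ∈ Finset.range N, (iteratedIntegral f (word k)).coeff n * harmonicSum n N l := by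
  induction k generalizing f with
  | nil => rfl
  | cons s k ih =>
    rw [List.forall_mem_cons] at hk
    rw [← List.singleton_append, word_append, iteratedIntegral_append, ← ih _ hk.2]
    simp only [coeff_iteratedIntegral_word_singleton f hk.1, List.cons_append, List.nil_append,
      harmonicSum, Finset.mul_sum, Finset.sum_mul]
    rw [Finset.sum_comm' (t' := Finset.range N) (s' := Finset.range) fun m n ↦ by
      simp only [Finset.mem_range, Finset.mem_Ioo]; omega]
    exact Finset.sum_congr rfl fun n _ ↦ Finset.sum_congr rfl fun m _ ↦ by ring

theorem harmonicSum_zero_append {N : ℕ} (hN : 0 < N) {k : List ℕ} (hk : ∀ i ∈ k, 1 ≤ i)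
    (l : List ℕ) :
    harmonicSum 0 N (k ++ l) =
      ∑ n ∈ Finset.range N,
        (iteratedIntegral (1 : PowerSeries K) (word k)).coeff n * harmonicSum n N l := by
  rw [← sum_coeff_mul_harmonicSum_append 1 N hk]
  simp [PowerSeries.coeff_one, hN]

theorem harmonicSum_zero_eq_sum_coeff {N : ℕ} (hN : 0 < N) {k : List ℕ}
    (hk : ∀ i ∈ k, 1 ≤ i) :
    harmonicSum 0 N k =
      ∑ n ∈ Finset.range N, (iteratedIntegral (1 : PowerSeries K) (word k)).coeff n := by
  simpa [harmonicSum] using harmonicSum_zero_append (K := K) hN hk []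

theorem forall_lt_and_strictMono_cons {a b d : ℕ} (m : Fin b) (n : Fin d → Fin b) :
    ((∀ i, a < ((Fin.cons m n : Fin (d + 1) → Fin b) i : ℕ)) ∧
      StrictMono (Fin.cons m n : Fin (d + 1) → Fin b)) ↔
    a < (m : ℕ) ∧ (∀ i, (m : ℕ) < n i) ∧ StrictMono n := by
  simp only [Fin.strictMono_cons, Fin.forall_fin_succ, Fin.cons_zero, Fin.cons_succ, Fin.lt_def]
  exact ⟨fun h ↦ ⟨h.1.1, h.2⟩, fun h ↦ ⟨⟨h.1, fun i ↦ h.1.trans (h.2.1 i)⟩, h.2⟩⟩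

theorem sum_strictMono_prod_inv_pow_eq_harmonicSum (a b : ℕ) (k : List ℕ) :
    ∑ n : Fin k.length → Fin b with (∀ i, a < (n i : ℕ)) ∧ StrictMono n,
      ∏ i, ((n i : ℕ) : K)⁻¹ ^ k.get i = harmonicSum a b k := by
  induction k generalizing a with
  | nil => simp [harmonicSum, Subsingleton.strictMono]
  | cons s k ih =>
    have hIoo : Finset.Ioo a b = {n ∈ Finset.range b | a < n} := by
      ext n
      simp only [Finset.mem_Ioo, Finset.mem_filter, Finset.mem_range, and_comm]
    calc
      _ = ∑ m : Fin b, ∑ n : Fin k.length → Fin b,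
            if a < (m : ℕ) ∧ (∀ i, (m : ℕ) < n i) ∧ StrictMono n then
              ((m : ℕ) : K)⁻¹ ^ s * ∏ i, ((n i : ℕ) : K)⁻¹ ^ k.get i else 0 := by
        rw [Finset.sum_filter, ← Fintype.sum_prod_type']
        let e := Fin.consEquiv fun _ : Fin (k.length + 1) ↦ Fin b
        refine (e.sum_comp _).symm.trans <| Finset.sum_congr rfl fun x _ ↦ ?_
        exact if_congr (forall_lt_and_strictMono_cons x.1 x.2)
          (Fin.prod_univ_succ (n := k.length) _) rfl
      _ = ∑ m : Fin b, if a < (m : ℕ) then ((m : ℕ) : K)⁻¹ ^ s * harmonicSum m b k else 0 := by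
        refine Finset.sum_congr rfl fun m _ ↦ ?_
        rw [← ih, Finset.mul_sum, Finset.sum_filter]
        split_ifs with h <;> simp only [h, true_and, false_and, if_false, Finset.sum_const_zero]
      _ = harmonicSum a b (s :: k) := by
        rw [Fin.sum_univ_eq_sum_range
          (fun m ↦ if a < m then (m : K)⁻¹ ^ s * harmonicSum m b k else 0), ← Finset.sum_filter,
          ← hIoo, harmonicSum]

end HarmonicSum

section FiniteMultipleZeta

variable (p : ℕ) [Fact p.Prime]

theorem zetaP_eq_harmonicSum (k : List ℕ) : zetaP p k = harmonicSum 0 p k :=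
  sum_strictMono_prod_inv_pow_eq_harmonicSum 0 p k

theorem zetaP_append_reverse {k l : List ℕ} (hk : ∀ i ∈ k, 1 ≤ i) (hl : ∀ i ∈ l, 1 ≤ i) :
    (-1 : ZMod p) ^ l.sum * zetaP p (k ++ l.reverse) =
      ∑ n ∈ Finset.range p, (iteratedIntegral (1 : PowerSeries (ZMod p)) (word k) *
        iteratedIntegral 1 (word l)).coeff n := by
  have hp : 0 < p := (Fact.out : p.Prime).pos
  rw [zetaP_eq_harmonicSum, harmonicSum_zero_append hp hk, Finset.mul_sum]
  simp only [PowerSeries.coeff_mul, Finset.Nat.sum_antidiagonal_eq_sum_range_succ_mk]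
  rw [Finset.sum_range_diag_flip p fun i j ↦
    (iteratedIntegral 1 (word k)).coeff i * (iteratedIntegral 1 (word l)).coeff j]
  refine Finset.sum_congr rfl fun m hm ↦ ?_
  rw [Finset.mem_range] at hm
  have hrev := harmonicSum_reverse (K := ZMod p) p (a := m) le_rfl l.reverse
  rw [List.reverse_reverse, List.sum_reverse, Nat.sub_self] at hrev
  rw [mul_left_comm, ← hrev, harmonicSum_zero_eq_sum_coeff (by omega) hl, Finset.mul_sum]

theorem zetaP_wordToIndex {w : List Bool} (hw : w.head? ≠ some false) :
    zetaP p (wordToIndex w) =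
      ∑ n ∈ Finset.range p, (iteratedIntegral (1 : PowerSeries (ZMod p)) w).coeff n := by
  rw [zetaP_eq_harmonicSum, harmonicSum_zero_eq_sum_coeff (Fact.out : p.Prime).pos
    one_le_of_mem_wordToIndex, word_wordToIndex hw]

theorem sum_mul_zetaP_wordToIndex {f : List Bool →₀ ℤ}
    (hf : ∀ w ∈ f.support, w.head? ≠ some false) :
    ∑ w ∈ f.support, (f w : ZMod p) * zetaP p (wordToIndex w) =
      ∑ n ∈ Finset.range p, (polylog f : PowerSeries (ZMod p)).coeff n := by
  simp only [polylog, Finsupp.linearCombination_apply, Finsupp.sum, map_sum, map_zsmul]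
  rw [Finset.sum_comm]
  refine Finset.sum_congr rfl fun w hw ↦ ?_
  rw [zetaP_wordToIndex p (hf w hw), Finset.mul_sum]
  simp only [zsmul_eq_mul]

end FiniteMultipleZeta

/-- **Shuffle relation for finite multiple zeta values.**
For a prime `p` and nonempty indices `k = (k₁,…,kₐ)`, `l = (l₁,…,l_b)`,
`(-1)^{wt(l)} ζ^{(p)}(k₁,…,kₐ,l_b,…,l₁) = Σ_h c_h ζ^{(p)}(h)` in `ℤ/pℤ`,
where `h` runs over the indices whose word occurs in `w(k) ⧢ w(l)` with
integer coefficient `c_h`. -/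
theorem shuffle_relation_fmzv (p : ℕ) (hp : p.Prime) (k l : List ℕ)
    (hk : k ≠ []) (hk1 : ∀ i ∈ k, 1 ≤ i)
    (hl : l ≠ []) (hl1 : ∀ i ∈ l, 1 ≤ i) :
    (-1 : ZMod p) ^ l.sum * zetaP p (k ++ l.reverse) =
      ∑ w ∈ (shuffle (word k) (word l)).support,
        ((shuffle (word k) (word l) w : ℤ) : ZMod p) * zetaP p (wordToIndex w) := by
  have : Fact p.Prime := ⟨hp⟩
  have hN : ∀ n < p, (n : ZMod p) = 0 → n = 0 := fun n hn h ↦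
    Nat.eq_zero_of_dvd_of_lt ((ZMod.natCast_eq_zero_iff n p).1 h) hn
  have hhead : ∀ w ∈ (shuffle (word k) (word l)).support, w.head? ≠ some false := fun w hw ↦
    (head?_eq_or_of_mem_support_shuffle hw).elim (· ▸ head?_word_ne_false k)
      (· ▸ head?_word_ne_false l)
  have hprod := PowerSeries.X_pow_dvd_iff.1 <|
    X_pow_dvd_iteratedIntegral_mul_sub_polylog_shuffle hN
      (head?_word_ne_false k) (head?_word_ne_false l)
  rw [zetaP_append_reverse p hk1 hl1, sum_mul_zetaP_wordToIndex p hhead]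
  refine Finset.sum_congr rfl fun n hn ↦ ?_
  rw [← sub_eq_zero, ← map_sub]
  exact hprod n (Finset.mem_range.1 hn)
end
end

section
/- Cyclic sum formula: let k=(k_1,…,k_a) be a nonempty index (a≥1, all k_i≥1) with at least one entry ≥2. For 0≤t≤a−1 write σ^t k = (k_{t+1},…,k_a,k_1,…,k_t) for the t-fold cyclic shift. Then Σ_{t=0}^{a−1} ζ((σ^t k)_↑) = Σ_{t=0}^{a−1} Σ_{j=0}^{(σ^t k)_a − 2} ζ( j+1, (σ^t k)_1, …, (σ^t k)_{a−1}, (σ^t k)_a − j ), where (σ^t k)_i denotes the i-th entry of σ^t k and inner sums with (σ^t k)_a = 1 are empty; all indices appearing are admissible, so all multiple zeta values converge. (Summing over all a cyclic shifts counts each member of the cyclic equivalence class of k with equal multiplicity on both sides, so this is equivalent to the sum over the cyclic equivalence class.) -/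
open scoped Classical

noncomputable section

/-- Multiple zeta value of an index `k = (k₁, …, kₐ)`:
`ζ(k) = Σ_{0 < n₁ < ⋯ < nₐ} ∏ nᵢ^(-kᵢ)`, as a `tsum` of reals. -/
def mzv (k : List ℕ) : ℝ :=
  ∑' n : Fin k.length → ℕ,
    Set.indicator {n : Fin k.length → ℕ | (∀ i, 0 < n i) ∧ StrictMono n}
      (fun n => ∏ i, ((n i : ℝ) ^ k.get i)⁻¹) n

/-- `k_↑`: increase the last entry of an index by `1` (`∅_↑ = ∅`). -/
def upLast : List ℕ → List ℕ
  | [] => []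
  | k => k.dropLast ++ [k.getLast! + 1]

/-!
The cyclic sum `T(k) = ∑ (∏ nᵢ^(-kᵢ)) / (nₐ - m)` over `0 ≤ m < n₁ < ⋯ < nₐ` ties the smallest
variable `m` to the largest one `nₐ`. The partial fraction `1/(n(n-m)) + 1/(mn) = 1/(m(n-m))` moves
one unit of exponent from `nₐ` to `m` at the cost of a zeta value `ζ(j+1, k₁, …, kₐ₋₁, kₐ-j)`. Once
the exponent of `nₐ` is down to one, `∑_{n>x} m/(n(n-m)) = ∑_{p<m} 1/(x-p)` telescopes and
introduces a new smallest variable `p`, which gives `T` of the rotated index. Summed over all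
rotations the values of `T` cancel, provided that they are finite. Finiteness is clear for an index
with last entry at least two, and the relation between `T(k)` and its rotation propagates it round
the cycle.
-/

open scoped ENNReal

open Filter Topology Finset

/-- The nested sum `∑_{m < n₁ < ⋯ < nₐ} (∏ nᵢ^(-kᵢ)) f(nₐ)`, bundled as a linear functional of `f`;
for the empty index it is evaluation at `m`. Values in `ℝ≥0∞` allow all rearrangements to be made
before convergence is settled. -/
def nestedSum : List ℕ → ℕ → (ℕ → ℝ≥0∞) →ₗ[ℝ≥0∞] ℝ≥0∞
  | [], m => LinearMap.proj m
  | k :: l, m =>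
    { toFun := fun f => ∑' n : Set.Ioi m, (((n : ℕ) : ℝ≥0∞) ^ k)⁻¹ * nestedSum l n f
      map_add' := fun f g => by simp only [map_add, mul_add, ENNReal.tsum_add]
      map_smul' := fun a f => by
        simp only [map_smul, smul_eq_mul, mul_left_comm _ a, ENNReal.tsum_mul_left,
          RingHom.id_apply] }

/-- The factor `1 / (n - m)` linking the two ends of a cyclic sum. The subtraction is that of `ℕ`,
so the value is `∞` for `n ≤ m`; it only matters for `m < n`. -/
def invSub (m n : ℕ) : ℝ≥0∞ := ((n - m : ℕ) : ℝ≥0∞)⁻¹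

/-- The `ℝ≥0∞`-valued multiple zeta value of an index. -/
def emzv (k : List ℕ) : ℝ≥0∞ := nestedSum k 0 1

/-- The cyclic sum `T(k) = ∑_{0 ≤ m < n₁ < ⋯ < nₐ} (∏ nᵢ^(-kᵢ)) / (nₐ - m)` of Hoffman and Ohno. -/
def cyclicSum (k : List ℕ) : ℝ≥0∞ := ∑' m, nestedSum k m (invSub m)

/-- The cyclic sum `∑_{0 < m < n₁ < ⋯ < nₐ} m^(-j) (∏ nᵢ^(-kᵢ)) / (nₐ - m)` in which the smallest
variable is positive and carries an exponent `j`. These interpolate between `T(k₁, …, kₐ)` and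
`T(kₐ, k₁, …, kₐ₋₁)`. -/
def weightedCyclicSum (j : ℕ) (k : List ℕ) : ℝ≥0∞ :=
  ∑' m : Set.Ioi 0, (((m : ℕ) : ℝ≥0∞) ^ j)⁻¹ * nestedSum k m (invSub m)

/-- The contribution `∑_{j=0}^{kₐ-2} ζ(j+1, k₁, …, kₐ₋₁, kₐ-j)` of an index to the right-hand side
of the cyclic sum formula. -/
def splitSum (k : List ℕ) : ℝ≥0∞ :=
  ∑ j ∈ range (k.getLast! - 1), emzv ((j + 1) :: (k.dropLast ++ [k.getLast! - j]))

theorem ennreal_inv_pow_succ (x : ℝ≥0∞) (d : ℕ) : (x ^ (d + 1))⁻¹ = (x ^ d)⁻¹ * x⁻¹ := by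
  rw [ENNReal.inv_pow, ENNReal.inv_pow, pow_succ]

theorem tsum_Ioi_eq_tsum_nat (m : ℕ) (f : ℕ → ℝ≥0∞) :
    ∑' n : Set.Ioi m, f n = ∑' i, f (m + i + 1) := by
  have range_eq : Set.Ioi m = Set.range fun i => m + i + 1 := by
    ext n
    exact ⟨fun hn => ⟨n - (m + 1), by grind⟩, by grind⟩
  rw [range_eq]
  exact tsum_range f fun i j hij => by grind

theorem tsum_tsum_Ioi_comm (F : ℕ → ℕ → ℝ≥0∞) :
    ∑' m, ∑' n : Set.Ioi m, F m n = ∑' n : Set.Ioi 0, ∑ m ∈ range n, F m n := by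
  simp only [_root_.tsum_subtype _ (F _)]
  rw [_root_.tsum_subtype _ fun n => ∑ m ∈ range n, F m n, ENNReal.tsum_comm]
  refine tsum_congr fun n => ?_
  have sum_lt : ∑' m, (Set.Ioi m).indicator (F m) n =
      ∑ m ∈ range n, (Set.Ioi m).indicator (F m) n :=
    tsum_eq_sum fun m hm => Set.indicator_of_notMem (by simpa using hm) _
  rw [sum_lt]
  rcases n.eq_zero_or_pos with rfl | hn
  · simp
  · rw [Set.indicator_of_mem (Set.mem_Ioi.2 hn)]
    exact sum_congr rfl fun m hm => Set.indicator_of_mem (Set.mem_Ioi.2 (mem_range.1 hm)) _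

theorem tsum_eq_of_telescoping {g h : ℕ → ℝ≥0∞} (hgh : ∀ n, g n = h n + g (n + 1))
    (hg : Tendsto g atTop (𝓝 0)) : ∑' n, h n = g 0 := by
  have partial_sum (N : ℕ) : ∑ n ∈ range N, h n + g N = g 0 := by
    induction N with
    | zero => simp
    | succ N ih => rw [sum_range_succ, add_assoc, ← hgh, ih]
  have lim := (ENNReal.tendsto_nat_tsum h).add hg
  simp only [partial_sum, add_zero] at lim
  exact tendsto_nhds_unique lim tendsto_const_nhds

section NestedSum

variable {l l' : List ℕ} {c m : ℕ} {f g : ℕ → ℝ≥0∞}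

@[simp]
theorem nestedSum_nil : nestedSum [] m f = f m := rfl

theorem nestedSum_cons :
    nestedSum (c :: l) m f = ∑' n : Set.Ioi m, (((n : ℕ) : ℝ≥0∞) ^ c)⁻¹ * nestedSum l n f := rfl

theorem nestedSum_append :
    nestedSum (l ++ l') m f = nestedSum l m fun n => nestedSum l' n f := by
  induction l generalizing m with
  | nil => rfl
  | cons c l ih => simp only [List.cons_append, nestedSum_cons, ih]

theorem nestedSum_concat_succ :
    nestedSum (l ++ [c + 1]) m f = nestedSum (l ++ [c]) m fun n => (n : ℝ≥0∞)⁻¹ * f n := by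
  simp only [nestedSum_append, nestedSum_cons, nestedSum_nil, ennreal_inv_pow_succ,
    mul_assoc]

theorem nestedSum_mono (h : ∀ n, m ≤ n → f n ≤ g n) : nestedSum l m f ≤ nestedSum l m g := by
  induction l generalizing m with
  | nil => exact h m le_rfl
  | cons c l ih =>
    refine ENNReal.tsum_le_tsum fun n => ?_
    gcongr
    exact ih fun x hx => h x (n.2.le.trans hx)

theorem nestedSum_mono_of_ne_nil (hl : l ≠ []) (h : ∀ n, m < n → f n ≤ g n) :
    nestedSum l m f ≤ nestedSum l m g := by
  cases l with
  | nil => contradiction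
  | cons c l =>
    refine ENNReal.tsum_le_tsum fun n => ?_
    gcongr
    exact nestedSum_mono fun x hx => h x (n.2.trans_le hx)

theorem nestedSum_congr (h : ∀ n, m ≤ n → f n = g n) : nestedSum l m f = nestedSum l m g :=
  (nestedSum_mono fun n hn => (h n hn).le).antisymm (nestedSum_mono fun n hn => (h n hn).ge)

end NestedSum

section CyclicSum

variable (l : List ℕ) (c j : ℕ)

theorem invSub_zero_left (n : ℕ) : invSub 0 n = (n : ℝ≥0∞)⁻¹ := rfl

theorem invSub_succ_succ (m n : ℕ) : invSub (m + 1) (n + 1) = invSub m n := by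
  rw [invSub, Nat.add_sub_add_right, invSub]

theorem tendsto_invSub_atTop (m : ℕ) : Tendsto (invSub m) atTop (𝓝 0) :=
  ENNReal.tendsto_inv_nat_nhds_zero.comp (tendsto_sub_atTop_nat m)

theorem inv_mul_invSub_add_inv_mul_inv {m n : ℕ} (hm : 0 < m) (hmn : m ≤ n) :
    (n : ℝ≥0∞)⁻¹ * invSub m n + (m : ℝ≥0∞)⁻¹ * (n : ℝ≥0∞)⁻¹ = (m : ℝ≥0∞)⁻¹ * invSub m n := by
  obtain ⟨d, rfl⟩ := Nat.exists_eq_add_of_le hmn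
  rcases d.eq_zero_or_pos with rfl | hd
  · simp [invSub, ENNReal.mul_top]
  · have hm' : (m : NNReal) ≠ 0 := by positivity
    have hd' : (d : NNReal) ≠ 0 := by positivity
    have hmd : (m + d : NNReal) ≠ 0 := by positivity
    have key : (m + d : NNReal)⁻¹ * (d : NNReal)⁻¹ + (m : NNReal)⁻¹ * (m + d : NNReal)⁻¹ =
        (m : NNReal)⁻¹ * (d : NNReal)⁻¹ := by
      field_simp
    rw [invSub, Nat.add_sub_cancel_left]
    simpa [ENNReal.coe_inv, hm', hd', hmd] using congrArg ((↑) : NNReal → ℝ≥0∞) key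

/-- The terms `m = 0` of the cyclic sum are split off: there `1 / (nₐ - m)` raises the last exponent
by one. -/
theorem cyclicSum_concat :
    cyclicSum (l ++ [c]) = weightedCyclicSum 0 (l ++ [c]) + emzv (l ++ [c + 1]) := by
  have head : nestedSum (l ++ [c]) 0 (invSub 0) = emzv (l ++ [c + 1]) := by
    simp only [emzv, nestedSum_concat_succ, Pi.one_apply, mul_one]
    rfl
  rw [cyclicSum, tsum_eq_zero_add' ENNReal.summable, head, add_comm, weightedCyclicSum,
    tsum_Ioi_eq_tsum_nat 0 fun m => ((m : ℝ≥0∞) ^ 0)⁻¹ * nestedSum (l ++ [c]) m (invSub m)]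
  simp only [pow_zero, inv_one, one_mul, zero_add]

theorem weightedCyclicSum_concat_succ :
    weightedCyclicSum j (l ++ [c + 1]) + emzv ((j + 1) :: (l ++ [c + 1])) =
      weightedCyclicSum (j + 1) (l ++ [c]) := by
  rw [weightedCyclicSum, weightedCyclicSum, emzv, nestedSum_cons, ← ENNReal.tsum_add]
  refine tsum_congr fun ⟨m, hm⟩ => ?_
  have key : nestedSum (l ++ [c + 1]) m (invSub m) + (m : ℝ≥0∞)⁻¹ * nestedSum (l ++ [c + 1]) m 1 =
      (m : ℝ≥0∞)⁻¹ * nestedSum (l ++ [c]) m (invSub m) := by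
    simp only [nestedSum_concat_succ, ← smul_eq_mul, ← map_smul, ← map_add]
    refine nestedSum_congr fun n hn => ?_
    simpa using inv_mul_invSub_add_inv_mul_inv hm hn
  rw [ennreal_inv_pow_succ, mul_assoc, mul_assoc, ← mul_add, key]

theorem weightedCyclicSum_add_sum_emzv :
    weightedCyclicSum j (l ++ [c + 1]) +
        ∑ i ∈ range c, emzv ((j + i + 1) :: (l ++ [c + 1 - i])) =
      weightedCyclicSum (j + c) (l ++ [1]) := by
  induction c generalizing j with
  | zero => simp
  | succ c ih =>
    rw [sum_range_succ', add_comm (∑ _ ∈ _, _), ← add_assoc, Nat.sub_zero, add_zero,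
      weightedCyclicSum_concat_succ, show j + (c + 1) = j + 1 + c by omega, ← ih (j + 1)]
    simp only [Nat.add_sub_add_right, Nat.add_right_comm, ← add_assoc]

theorem sum_invSub_add_inv (m n : ℕ) :
    ∑ p ∈ range m, invSub p n + ((n + 1 : ℕ) : ℝ≥0∞)⁻¹ =
      ∑ p ∈ range m, invSub p (n + 1) + invSub m (n + 1) := by
  rw [← sum_range_succ, sum_range_succ']
  simp only [invSub_succ_succ, invSub_zero_left]

theorem tsum_Ioi_inv_mul_invSub {m x : ℕ} (hm : 0 < m) (hx : m ≤ x) :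
    ∑' n : Set.Ioi x, ((n : ℕ) : ℝ≥0∞)⁻¹ * invSub m n =
      (m : ℝ≥0∞)⁻¹ * ∑ p ∈ range m, invSub p x := by
  have hm_inv : (m : ℝ≥0∞)⁻¹ ≠ ∞ := by simpa using hm.ne'
  set g : ℕ → ℝ≥0∞ := fun n => (m : ℝ≥0∞)⁻¹ * ∑ p ∈ range m, invSub p n
  have g_tendsto : Tendsto g atTop (𝓝 0) := by
    simpa using ENNReal.Tendsto.const_mul
      (tendsto_finsetSum (range m) fun p _ => tendsto_invSub_atTop p) (Or.inr hm_inv)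
  have g_telescopes (n : ℕ) (hn : m ≤ n) :
      g n = ((n + 1 : ℕ) : ℝ≥0∞)⁻¹ * invSub m (n + 1) + g (n + 1) := by
    have h_fin : (m : ℝ≥0∞)⁻¹ * ((n + 1 : ℕ) : ℝ≥0∞)⁻¹ ≠ ∞ :=
      ENNReal.mul_ne_top hm_inv (by simp)
    rw [← ENNReal.add_left_inj h_fin, ← mul_add, sum_invSub_add_inv, mul_add,
      ← inv_mul_invSub_add_inv_mul_inv hm (by omega)]
    ring
  rw [tsum_Ioi_eq_tsum_nat x fun n => (n : ℝ≥0∞)⁻¹ * invSub m n]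
  exact tsum_eq_of_telescoping (g := fun i => g (x + i))
    (fun i => g_telescopes (x + i) (by omega))
    (by simpa only [add_comm x] using (tendsto_add_atTop_iff_nat x).2 g_tendsto)

theorem cyclicSum_cons :
    cyclicSum (c :: l) = ∑' n : Set.Ioi 0, (((n : ℕ) : ℝ≥0∞) ^ c)⁻¹ *
      nestedSum l n fun x => ∑ p ∈ range n, invSub p x := by
  simp only [cyclicSum, nestedSum_cons]
  rw [tsum_tsum_Ioi_comm fun m n => ((n : ℝ≥0∞) ^ c)⁻¹ * nestedSum l n (invSub m)]
  refine tsum_congr fun n => ?_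
  rw [← mul_sum, ← map_sum]
  congr 2
  ext x
  exact Finset.sum_apply ..

theorem weightedCyclicSum_concat_one :
    weightedCyclicSum c (l ++ [1]) = cyclicSum ((c + 1) :: l) := by
  rw [cyclicSum_cons, weightedCyclicSum]
  refine tsum_congr fun ⟨m, hm⟩ => ?_
  rw [ennreal_inv_pow_succ, mul_assoc, nestedSum_append, ← smul_eq_mul (m : ℝ≥0∞)⁻¹, ← map_smul]
  congr 1
  refine nestedSum_congr fun x hx => ?_
  simpa [nestedSum_cons] using tsum_Ioi_inv_mul_invSub hm hx

theorem cyclicSum_concat_add_sum_emzv :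
    cyclicSum (l ++ [c + 1]) + ∑ j ∈ range c, emzv ((j + 1) :: (l ++ [c + 1 - j])) =
      cyclicSum ((c + 1) :: l) + emzv (l ++ [c + 2]) := by
  have h := weightedCyclicSum_add_sum_emzv l c 0
  simp only [zero_add] at h
  rw [cyclicSum_concat, add_right_comm, h, weightedCyclicSum_concat_one]

end CyclicSum

section Convergence

variable {k l : List ℕ} {c m : ℕ} {f : ℕ → ℝ≥0∞} {C : ℝ≥0∞} {s : ℝ}

theorem inv_pow_le_ofReal_rpow_neg_one {n c : ℕ} (hn : 0 < n) (hc : 1 ≤ c) :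
    ((n : ℝ≥0∞) ^ c)⁻¹ ≤ ENNReal.ofReal ((n : ℝ) ^ (-1 : ℝ)) := by
  have hn' : (1 : ℝ≥0∞) ≤ n := by exact_mod_cast hn
  rw [Real.rpow_neg_one, ENNReal.ofReal_inv_of_pos (by positivity), ENNReal.ofReal_natCast,
    ENNReal.inv_le_inv]
  exact le_self_pow₀ hn' (by omega)

theorem ofReal_rpow_mul_ofReal_rpow {n : ℕ} (hn : 0 < n) (s t : ℝ) :
    ENNReal.ofReal ((n : ℝ) ^ s) * ENNReal.ofReal ((n : ℝ) ^ t) =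
      ENNReal.ofReal ((n : ℝ) ^ (s + t)) := by
  rw [← ENNReal.ofReal_mul (by positivity), Real.rpow_add (by positivity)]

/-- As `nᵢ ≤ nₐ`, the decay `nₐ^(-aε)` can be shared out, a factor `nᵢ^(-ε)` to each variable; then
the ordering of the variables is forgotten. -/
theorem nestedSum_rpow_le (hk : ∀ i ∈ k, 1 ≤ i) {ε : ℝ} (hε : 0 ≤ ε) :
    nestedSum k m (fun n => ENNReal.ofReal ((n : ℝ) ^ (-(k.length * ε)))) ≤
      (∑' n : ℕ, ENNReal.ofReal ((n : ℝ) ^ (-1 + -ε))) ^ k.length := by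
  induction k generalizing m with
  | nil => simp
  | cons c l ih =>
    rw [List.forall_mem_cons] at hk
    set S := ∑' n : ℕ, ENNReal.ofReal ((n : ℝ) ^ (-1 + -ε))
    have share (n x : ℕ) (hn : 0 < n) (hx : n ≤ x) :
        ENNReal.ofReal ((x : ℝ) ^ (-((c :: l).length * ε))) ≤
          ENNReal.ofReal ((n : ℝ) ^ (-ε)) * ENNReal.ofReal ((x : ℝ) ^ (-(l.length * ε))) := by
      have exponent : -((c :: l).length * ε) = -ε + -(l.length * ε) := by
        push_cast [List.length_cons]; ring
      rw [exponent, ← ofReal_rpow_mul_ofReal_rpow (hn.trans_le hx)]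
      refine mul_le_mul_left (ENNReal.ofReal_le_ofReal ?_) _
      exact Real.rpow_le_rpow_of_nonpos (by positivity) (by exact_mod_cast hx) (by linarith)
    have tail_le (n : ℕ) (hn : 0 < n) :
        nestedSum l n (fun x => ENNReal.ofReal ((x : ℝ) ^ (-((c :: l).length * ε)))) ≤
          ENNReal.ofReal ((n : ℝ) ^ (-ε)) * S ^ l.length :=
      calc nestedSum l n (fun x => ENNReal.ofReal ((x : ℝ) ^ (-((c :: l).length * ε))))
          ≤ nestedSum l n (ENNReal.ofReal ((n : ℝ) ^ (-ε)) •
              fun x : ℕ => ENNReal.ofReal ((x : ℝ) ^ (-(l.length * ε)))) :=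
            nestedSum_mono fun x hx => share n x hn hx
        _ ≤ ENNReal.ofReal ((n : ℝ) ^ (-ε)) * S ^ l.length := by
            rw [map_smul, smul_eq_mul]
            exact mul_le_mul_right (ih hk.2) _
    calc nestedSum (c :: l) m (fun x => ENNReal.ofReal ((x : ℝ) ^ (-((c :: l).length * ε))))
        ≤ ∑' n : Set.Ioi m, ENNReal.ofReal (((n : ℕ) : ℝ) ^ (-1 + -ε)) * S ^ l.length := by
          refine ENNReal.tsum_le_tsum fun ⟨n, hn⟩ => ?_
          have n_pos : 0 < n := Nat.zero_lt_of_lt hn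
          rw [← ofReal_rpow_mul_ofReal_rpow n_pos, mul_assoc]
          exact mul_le_mul' (inv_pow_le_ofReal_rpow_neg_one n_pos hk.1) (tail_le n n_pos)
      _ = (∑' n : Set.Ioi m, ENNReal.ofReal (((n : ℕ) : ℝ) ^ (-1 + -ε))) * S ^ l.length :=
          ENNReal.tsum_mul_right
      _ ≤ S * S ^ l.length :=
          mul_le_mul_left (ENNReal.tsum_comp_le_tsum_of_injective Subtype.val_injective _) _
      _ = S ^ (c :: l).length := by rw [List.length_cons, pow_succ']

theorem nestedSum_ne_top_of_le_rpow (hk : ∀ i ∈ k, 1 ≤ i) (hk_nil : k ≠ []) (hs : 0 < s)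
    (hC : C ≠ ∞) (hf : ∀ n, m < n → f n ≤ C * ENNReal.ofReal ((n : ℝ) ^ (-s))) :
    nestedSum k m f ≠ ∞ := by
  have length_pos : (0 : ℝ) < k.length := by exact_mod_cast List.length_pos_iff.2 hk_nil
  set ε := s / k.length with hε
  have ε_pos : 0 < ε := by positivity
  have hs_eq : s = k.length * ε := by rw [hε]; field_simp
  have zeta_ne_top : ∑' n : ℕ, ENNReal.ofReal ((n : ℝ) ^ (-1 + -ε)) ≠ ∞ :=
    (Real.summable_nat_rpow.2 (by linarith)).tsum_ofReal_ne_top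
  refine ne_top_of_le_ne_top
    (ENNReal.mul_ne_top hC (ENNReal.pow_ne_top (n := k.length) zeta_ne_top)) ?_
  calc nestedSum k m f
      ≤ nestedSum k m (C • fun n : ℕ => ENNReal.ofReal ((n : ℝ) ^ (-s))) :=
        nestedSum_mono_of_ne_nil hk_nil hf
    _ = C * nestedSum k m fun n => ENNReal.ofReal ((n : ℝ) ^ (-(k.length * ε))) := by
        rw [map_smul, smul_eq_mul, hs_eq]
    _ ≤ C * (∑' n : ℕ, ENNReal.ofReal ((n : ℝ) ^ (-1 + -ε))) ^ k.length :=
        mul_le_mul_right (nestedSum_rpow_le hk ε_pos.le) _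

theorem nestedSum_concat_ne_top (hl : ∀ i ∈ l, 1 ≤ i) (hc : 2 ≤ c) (hC : C ≠ ∞)
    (hf : ∀ n, m < n → f n ≤ C * ENNReal.ofReal √n) : nestedSum (l ++ [c]) m f ≠ ∞ := by
  obtain ⟨d, rfl⟩ := Nat.exists_eq_add_of_le' (one_le_two.trans hc)
  rw [nestedSum_concat_succ]
  refine nestedSum_ne_top_of_le_rpow (s := 1 / 2) (fun i hi => ?_) (by simp) (by norm_num) hC
    fun n hn => ?_
  · rcases List.mem_append.1 hi with hi | hi
    · exact hl i hi
    · rw [List.mem_singleton.1 hi]; omega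
  · have n_pos : 0 < n := Nat.zero_lt_of_lt hn
    calc (n : ℝ≥0∞)⁻¹ * f n
        ≤ ENNReal.ofReal ((n : ℝ) ^ (-1 : ℝ)) * (C * ENNReal.ofReal ((n : ℝ) ^ (1 / 2 : ℝ))) := by
          rw [← Real.sqrt_eq_rpow]
          simpa using mul_le_mul' (inv_pow_le_ofReal_rpow_neg_one n_pos le_rfl) (hf n hn)
      _ = C * ENNReal.ofReal ((n : ℝ) ^ (-(1 / 2) : ℝ)) := by
          rw [mul_left_comm, ofReal_rpow_mul_ofReal_rpow n_pos]
          norm_num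

theorem emzv_concat_ne_top (hl : ∀ i ∈ l, 1 ≤ i) (hc : 2 ≤ c) : emzv (l ++ [c]) ≠ ∞ := by
  refine nestedSum_concat_ne_top hl hc ENNReal.one_ne_top fun n hn => ?_
  rw [one_mul, Pi.one_apply, ENNReal.one_le_ofReal, Real.one_le_sqrt]
  exact_mod_cast hn

theorem sum_invSub_eq_harmonic (n : ℕ) :
    ∑ p ∈ range n, invSub p n = ENNReal.ofReal (harmonic n) := by
  rw [harmonic, Rat.cast_sum, ENNReal.ofReal_sum_of_nonneg fun i _ => by positivity,
    ← sum_range_reflect]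
  refine sum_congr rfl fun i hi => ?_
  have sub_eq : n - (n - 1 - i) = i + 1 := by grind
  rw [invSub, sub_eq, Rat.cast_inv, Rat.cast_natCast, ENNReal.ofReal_inv_of_pos (by positivity),
    ENNReal.ofReal_natCast]

theorem harmonic_le_two_mul_sqrt {n : ℕ} (hn : 0 < n) : (harmonic n : ℝ) ≤ 2 * √n := by
  have log_le : Real.log √n ≤ √n - 1 := Real.log_le_sub_one_of_pos (by positivity)
  rw [Real.log_sqrt (by positivity)] at log_le
  linarith [harmonic_le_one_add_log n]

theorem sum_invSub_le_two_mul_sqrt {m n : ℕ} (hn : 0 < n) (hmn : m ≤ n) :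
    ∑ p ∈ range m, invSub p n ≤ 2 * ENNReal.ofReal √n :=
  calc ∑ p ∈ range m, invSub p n
      ≤ ∑ p ∈ range n, invSub p n := sum_le_sum_of_subset (range_mono hmn)
    _ ≤ ENNReal.ofReal (2 * √n) := by
        rw [sum_invSub_eq_harmonic]
        exact ENNReal.ofReal_le_ofReal (harmonic_le_two_mul_sqrt hn)
    _ = 2 * ENNReal.ofReal √n := by rw [ENNReal.ofReal_mul zero_le_two, ENNReal.ofReal_ofNat]

theorem cyclicSum_le_nestedSum (hk : k ≠ []) :
    cyclicSum k ≤ nestedSum k 0 fun x => ∑ p ∈ range x, invSub p x := by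
  cases k with
  | nil => contradiction
  | cons c l =>
    rw [cyclicSum_cons, nestedSum_cons]
    gcongr with n
    exact nestedSum_mono fun x hx => sum_le_sum_of_subset (range_mono hx)

theorem cyclicSum_concat_ne_top (hl : ∀ i ∈ l, 1 ≤ i) (hc : 2 ≤ c) :
    cyclicSum (l ++ [c]) ≠ ∞ :=
  ne_top_of_le_ne_top
    (nestedSum_concat_ne_top hl hc ENNReal.ofNat_ne_top fun _ hn =>
      sum_invSub_le_two_mul_sqrt hn le_rfl)
    (cyclicSum_le_nestedSum (by simp))

end Convergence

section MultipleZetaValue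

theorem forall_lt_and_strictMono_cons_iff {b m a : ℕ} {t : Fin b → ℕ} :
    ((∀ i, m < (Fin.cons a t : Fin (b + 1) → ℕ) i) ∧
        StrictMono (Fin.cons a t : Fin (b + 1) → ℕ)) ↔
      m < a ∧ (∀ i, a < t i) ∧ StrictMono t := by
  simp only [StrictMono, Fin.forall_fin_succ, Fin.cons_zero, Fin.cons_succ, Fin.succ_lt_succ_iff,
    Fin.succ_pos, lt_self_iff_false, Fin.not_lt_zero]
  grind

/-- The term of the multiple sum `nestedSum k m 1` at a tuple `n`, extended by zero to tuples that
do not satisfy `m < n₁ < ⋯ < nₐ`. -/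
def chainTerm (k : List ℕ) (m : ℕ) (n : Fin k.length → ℕ) : ℝ≥0∞ :=
  {n : Fin k.length → ℕ | (∀ i, m < n i) ∧ StrictMono n}.indicator
    (fun n => ∏ i, ((n i : ℝ≥0∞) ^ k.get i)⁻¹) n

theorem chainTerm_cons (c : ℕ) (l : List ℕ) (m a : ℕ) (t : Fin l.length → ℕ) :
    chainTerm (c :: l) m (Fin.cons a t : Fin (l.length + 1) → ℕ) =
      (Set.Ioi m).indicator (fun n => ((n : ℝ≥0∞) ^ c)⁻¹ * chainTerm l n t) a := by
  have mem_iff : (Fin.cons a t : Fin (l.length + 1) → ℕ) ∈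
        {n : Fin (c :: l).length → ℕ | (∀ i, m < n i) ∧ StrictMono n} ↔
      a ∈ Set.Ioi m ∧ t ∈ {n : Fin l.length → ℕ | (∀ i, a < n i) ∧ StrictMono n} :=
    forall_lt_and_strictMono_cons_iff
  simp only [chainTerm, Set.indicator_apply, mem_iff, ite_and, mul_ite, mul_zero]
  refine if_congr Iff.rfl (if_congr Iff.rfl ?_ rfl) rfl
  exact Fin.prod_univ_succ _

theorem chainTerm_ne_top (k : List ℕ) (m : ℕ) (n : Fin k.length → ℕ) : chainTerm k m n ≠ ∞ := by
  rw [chainTerm, Set.indicator_apply]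
  split_ifs with hn
  · exact ENNReal.prod_ne_top fun i _ => by simp [(Nat.zero_lt_of_lt (hn.1 i)).ne']
  · exact ENNReal.zero_ne_top

theorem nestedSum_one_eq_tsum (k : List ℕ) (m : ℕ) :
    nestedSum k m 1 = ∑' n : Fin k.length → ℕ, chainTerm k m n := by
  induction k generalizing m with
  | nil =>
    have : IsEmpty (Fin ([] : List ℕ).length) := Fin.isEmpty
    have empty_mem : (isEmptyElim : Fin ([] : List ℕ).length → ℕ) ∈
        {n : Fin ([] : List ℕ).length → ℕ | (∀ i, m < n i) ∧ StrictMono n} :=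
      ⟨isEmptyElim, Subsingleton.strictMono _⟩
    rw [tsum_eq_single isEmptyElim fun n hn => absurd (Subsingleton.elim _ _) hn, chainTerm,
      Set.indicator_of_mem empty_mem, Fintype.prod_empty]
    rfl
  | cons c l ih =>
    calc nestedSum (c :: l) m 1
        = ∑' a, (Set.Ioi m).indicator (fun n => ((n : ℝ≥0∞) ^ c)⁻¹ * nestedSum l n 1) a :=
          _root_.tsum_subtype (Set.Ioi m) fun n => ((n : ℝ≥0∞) ^ c)⁻¹ * nestedSum l n 1
      _ = ∑' a, ∑' t : Fin l.length → ℕ,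
            chainTerm (c :: l) m (Fin.cons a t : Fin (l.length + 1) → ℕ) := by
          refine tsum_congr fun a => ?_
          simp only [chainTerm_cons, Set.indicator_apply, ih]
          split_ifs
          · rw [ENNReal.tsum_mul_left]
          · rw [tsum_zero]
      _ = ∑' p : ℕ × (Fin l.length → ℕ),
            chainTerm (c :: l) m (Fin.consEquiv (fun _ : Fin (l.length + 1) => ℕ) p) :=
          ENNReal.tsum_prod.symm
      _ = ∑' n : Fin (c :: l).length → ℕ, chainTerm (c :: l) m n :=
          (Fin.consEquiv fun _ : Fin (l.length + 1) => ℕ).tsum_eq (chainTerm (c :: l) m)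

theorem mzv_eq_toReal_emzv (k : List ℕ) : mzv k = (emzv k).toReal := by
  rw [emzv, nestedSum_one_eq_tsum, ENNReal.tsum_toReal_eq (chainTerm_ne_top k 0), mzv]
  refine tsum_congr fun n => ?_
  simp only [chainTerm, Set.indicator_apply]
  split_ifs <;> simp [ENNReal.toReal_prod]

end MultipleZetaValue

section CyclicShifts

variable {k l : List ℕ} {c : ℕ}

theorem getLast!_concat : (l ++ [c]).getLast! = c := by
  rw [List.getLast!_eq_getLast?_getD, List.getLast?_concat, Option.getD_some]

theorem upLast_concat : upLast (l ++ [c]) = l ++ [c + 1] := by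
  have unfold_upLast {w : List ℕ} (hw : w ≠ []) : upLast w = w.dropLast ++ [w.getLast! + 1] := by
    cases w with
    | nil => contradiction
    | cons _ _ => rfl
  rw [unfold_upLast (by simp), List.dropLast_concat, getLast!_concat]

theorem splitSum_concat :
    splitSum (l ++ [c]) = ∑ j ∈ range (c - 1), emzv ((j + 1) :: (l ++ [c - j])) := by
  rw [splitSum, getLast!_concat, List.dropLast_concat]

theorem cyclicSum_add_splitSum_rotate_one (hk : k ≠ []) (hk1 : ∀ i ∈ k, 1 ≤ i) :
    cyclicSum (k.rotate 1) + splitSum (k.rotate 1) = cyclicSum k + emzv (upLast (k.rotate 1)) := by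
  cases k with
  | nil => contradiction
  | cons c l =>
    obtain ⟨d, rfl⟩ := Nat.exists_eq_add_of_le' (hk1 c List.mem_cons_self)
    rw [List.rotate_cons_succ, List.rotate_zero, splitSum_concat, upLast_concat]
    exact cyclicSum_concat_add_sum_emzv l d

theorem emzv_split_ne_top (hk1 : ∀ i ∈ k, 1 ≤ i) :
    ∀ j ∈ range (k.getLast! - 1), emzv ((j + 1) :: (k.dropLast ++ [k.getLast! - j])) ≠ ∞ := by
  intro j hj
  rw [mem_range] at hj
  refine emzv_concat_ne_top (l := (j + 1) :: k.dropLast) ?_ (by omega)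
  exact List.forall_mem_cons.2 ⟨by omega, fun i hi => hk1 i (List.mem_of_mem_dropLast hi)⟩

theorem splitSum_ne_top (hk1 : ∀ i ∈ k, 1 ≤ i) : splitSum k ≠ ∞ :=
  ENNReal.sum_ne_top.2 (emzv_split_ne_top hk1)

theorem emzv_upLast_ne_top (hk : k ≠ []) (hk1 : ∀ i ∈ k, 1 ≤ i) : emzv (upLast k) ≠ ∞ := by
  rw [← List.dropLast_append_getLast hk, upLast_concat]
  exact emzv_concat_ne_top (fun i hi => hk1 i (List.mem_of_mem_dropLast hi))
    (Nat.succ_le_succ (hk1 _ (List.getLast_mem hk)))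

theorem cyclicSum_ne_top_of_rotate_one (hk : k ≠ []) (hk1 : ∀ i ∈ k, 1 ≤ i)
    (h : cyclicSum (k.rotate 1) ≠ ∞) : cyclicSum k ≠ ∞ := by
  have sum_ne_top : cyclicSum k + emzv (upLast (k.rotate 1)) ≠ ∞ := by
    rw [← cyclicSum_add_splitSum_rotate_one hk hk1]
    exact ENNReal.add_ne_top.2 ⟨h, splitSum_ne_top (by simpa using hk1)⟩
  exact (ENNReal.add_ne_top.1 sum_ne_top).1

theorem cyclicSum_append_ne_top_comm {u v : List ℕ} (huv : ∀ i ∈ u ++ v, 1 ≤ i)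
    (h : cyclicSum (v ++ u) ≠ ∞) : cyclicSum (u ++ v) ≠ ∞ := by
  induction u generalizing v with
  | nil => simpa using h
  | cons c u ih =>
    refine cyclicSum_ne_top_of_rotate_one (by simp) huv ?_
    simpa using ih (v := v ++ [c]) (by grind) (by simpa using h)

theorem cyclicSum_ne_top (hk1 : ∀ i ∈ k, 1 ≤ i) (hk2 : ∃ i ∈ k, 2 ≤ i) : cyclicSum k ≠ ∞ := by
  obtain ⟨c, hc, two_le⟩ := hk2
  obtain ⟨u, v, rfl⟩ := List.append_of_mem hc
  rw [List.append_cons] at hk1 ⊢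
  refine cyclicSum_append_ne_top_comm hk1 ?_
  rw [← List.append_assoc]
  refine cyclicSum_concat_ne_top (fun i hi => hk1 i ?_) two_le
  grind

theorem sum_rotate_succ {α M : Type*} [AddCommMonoid M] (k : List α) (F : List α → M) :
    ∑ t ∈ range k.length, F (k.rotate (t + 1)) = ∑ t ∈ range k.length, F (k.rotate t) := by
  cases h : k.length with
  | zero => rfl
  | succ n => rw [sum_range_succ, sum_range_succ', ← h, List.rotate_length, List.rotate_zero]

theorem sum_emzv_upLast_rotate (hk1 : ∀ i ∈ k, 1 ≤ i) (hk2 : ∃ i ∈ k, 2 ≤ i) :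
    ∑ t ∈ range k.length, emzv (upLast (k.rotate t)) =
      ∑ t ∈ range k.length, splitSum (k.rotate t) := by
  have hk : k ≠ [] := List.ne_nil_of_mem hk2.choose_spec.1
  have step (t : ℕ) : cyclicSum (k.rotate (t + 1)) + splitSum (k.rotate (t + 1)) =
      cyclicSum (k.rotate t) + emzv (upLast (k.rotate (t + 1))) := by
    simpa only [List.rotate_rotate] using
      cyclicSum_add_splitSum_rotate_one (k := k.rotate t) (by simpa using hk) (by simpa using hk1)
  have total := sum_congr (rfl : range k.length = _) fun t _ => step t
  rw [sum_add_distrib, sum_add_distrib, sum_rotate_succ k cyclicSum, sum_rotate_succ k splitSum,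
    sum_rotate_succ k fun w => emzv (upLast w)] at total
  have cyclicSum_fin : ∑ t ∈ range k.length, cyclicSum (k.rotate t) ≠ ∞ :=
    ENNReal.sum_ne_top.2 fun t _ => cyclicSum_ne_top (by simpa using hk1) (by simpa using hk2)
  exact ((ENNReal.add_right_inj cyclicSum_fin).1 total).symm

end CyclicShifts

/-- **Cyclic sum formula.**  For a nonempty index `k = (k₁,…,kₐ)` with some entry `≥ 2`,
summing over all cyclic shifts `σᵗk = (k_{t+1},…,kₐ,k₁,…,k_t)`:
`Σ_t ζ((σᵗk)_↑) = Σ_t Σ_{j=0}^{(σᵗk)ₐ - 2} ζ(j+1, (σᵗk)₁, …, (σᵗk)_{a-1}, (σᵗk)ₐ - j)`. -/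
theorem cyclic_sum_formula (k : List ℕ) (hk : k ≠ [])
    (hk1 : ∀ i ∈ k, 1 ≤ i) (hk2 : ∃ i ∈ k, 2 ≤ i) :
    ∑ t ∈ Finset.range k.length, mzv (upLast (k.rotate t)) =
      ∑ t ∈ Finset.range k.length, ∑ j ∈ Finset.range ((k.rotate t).getLast! - 1),
        mzv ((j + 1) :: ((k.rotate t).dropLast ++ [(k.rotate t).getLast! - j])) := by
  have rotate_pos (t : ℕ) : ∀ i ∈ k.rotate t, 1 ≤ i := by simpa using hk1
  have rotate_ne_nil (t : ℕ) : k.rotate t ≠ [] := by simpa using hk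
  simp only [mzv_eq_toReal_emzv]
  calc ∑ t ∈ range k.length, (emzv (upLast (k.rotate t))).toReal
      = (∑ t ∈ range k.length, emzv (upLast (k.rotate t))).toReal :=
        (ENNReal.toReal_sum fun t _ => emzv_upLast_ne_top (rotate_ne_nil t) (rotate_pos t)).symm
    _ = (∑ t ∈ range k.length, splitSum (k.rotate t)).toReal := by
        rw [sum_emzv_upLast_rotate hk1 hk2]
    _ = ∑ t ∈ range k.length, (splitSum (k.rotate t)).toReal :=
        ENNReal.toReal_sum fun t _ => splitSum_ne_top (rotate_pos t)
    _ = _ := sum_congr rfl fun t _ => ENNReal.toReal_sum (emzv_split_ne_top (rotate_pos t))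
end
end
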